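/- arXiv:1507.08600 — 3 statements merged into one kernel-verified Lean document; each statement's English description precedes it below -/
import Mathlib

section
/- For all tuples x, y, z over Σ and every index j with rk(x) < j ≤ rk(x) + rk(y), one has (x · y) ⊙_j z = x · (y ⊙_{j − rk(x)} z). -/
/- A tuple over alphabet `α` is modeled as a nonempty `List (List α)`;
components are words `List α`. -/

/-- Rank of a tuple: number of components minus one. -/
def TupRk {α : Type*} (x : List (List α)) : ℕ := x.length - 1

/-- Concatenation of tuples:
`(x₀,…,x_i)·(y₀,…,y_j) = (x₀,…,x_{i−1}, x_i y₀, y₁,…,y_j)`. -/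
def TupConc {α : Type*} (x y : List (List α)) : List (List α) :=
  x.dropLast ++ (x.getLastD [] ++ y.headD []) :: y.tail

/-- Intercalation `x ⊙_l y`: substitutes the tuple `y` into the `l`-th gap of `x`,
`(x₀,…,x_i) ⊙_l (y₀,…,y_j) = (x₀,…,x_{l−2}, x_{l−1}y₀, y₁,…,y_{j−1}, y_j x_l, x_{l+1},…,x_i)`. -/
def TupInter {α : Type*} (x : List (List α)) (l : ℕ) (y : List (List α)) : List (List α) :=
  TupConc (TupConc (x.take l) y) (x.drop l)

theorem tupConc_assoc_aux {α : Type*} (x y z : List (List α)) :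
    TupConc (TupConc x y) z = TupConc x (TupConc y z) := by
  rcases y with _ | ⟨b, y⟩
  · simp [TupConc]
  · rcases List.eq_nil_or_concat' y with rfl | ⟨y', c, rfl⟩
    · simp [TupConc]
    · have h1 : TupConc x (b :: (y' ++ [c]))
          = (x.dropLast ++ (x.getLastD [] ++ b) :: y') ++ [c] := by simp [TupConc]
      have h2 : TupConc (b :: (y' ++ [c])) z = b :: (y' ++ (c ++ z.headD []) :: z.tail) := by
        rw [← List.cons_append]
        unfold TupConc
        rw [List.dropLast_concat, List.getLastD_concat, List.cons_append]
      rw [h1, h2]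
      unfold TupConc
      rw [List.dropLast_concat, List.getLastD_concat]
      simp

/-- `(x · y) ⊙_j z = x · (y ⊙_{j − rk x} z)` for `rk x < j ≤ rk x + rk y`. -/
theorem tupInter_conc_right {α : Type*} (x y z : List (List α)) (j : ℕ)
    (hx : x ≠ []) (hy : y ≠ []) (hz : z ≠ [])
    (hj1 : TupRk x < j) (hj2 : j ≤ TupRk x + TupRk y) :
    TupInter (TupConc x y) j z = TupConc x (TupInter y (j - TupRk x) z) := by
  obtain ⟨x', a, rfl⟩ := (List.eq_nil_or_concat' x).resolve_left hx
  obtain ⟨b, y', rfl⟩ := List.exists_cons_of_ne_nil hy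
  have hr : TupRk (x' ++ [a]) = x'.length := by simp [TupRk]
  rw [hr] at hj1 ⊢
  obtain ⟨k, rfl⟩ : ∃ k, j = x'.length + (k + 1) := ⟨j - x'.length - 1, by omega⟩
  have hc : TupConc (x' ++ [a]) (b :: y') = x' ++ (a ++ b) :: y' := by simp [TupConc]
  have ht : (x' ++ (a ++ b) :: y').take (x'.length + (k + 1))
      = TupConc (x' ++ [a]) ((b :: y').take (k + 1)) := by
    simp [TupConc, List.take_append]
  have hd : (x' ++ (a ++ b) :: y').drop (x'.length + (k + 1)) = (b :: y').drop (k + 1) := by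
    simp [List.drop_append]
  unfold TupInter
  rw [hc, ht, hd, Nat.add_sub_cancel_left, tupConc_assoc_aux, tupConc_assoc_aux,
    tupConc_assoc_aux]
end

section
/- For all tuples x, y, z over Σ and indices j, l with 1 ≤ l ≤ rk(x) and l + rk(y) ≤ j ≤ rk(x) + rk(y) − 1, one has (x ⊙_l y) ⊙_j z = (x ⊙_{j − rk(y) + 1} z) ⊙_l y. -/
theorem tupConc_append {α : Type*} (P B C : List (List α)) (hB : B ≠ []) :
    TupConc P (B ++ C) = TupConc P B ++ C := by
  cases B with
  | nil => exact absurd rfl hB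
  | cons b B => simp [TupConc]

theorem append_tupConc {α : Type*} (A B z : List (List α)) (hB : B ≠ []) :
    TupConc (A ++ B) z = A ++ TupConc B z := by
  obtain ⟨B, b, rfl⟩ := B.eq_nil_or_concat.resolve_left hB
  simp [TupConc, ← List.append_assoc, List.getLastD_eq_getLast?]

theorem tupConc_ne {α : Type*} (A B : List (List α)) : TupConc A B ≠ [] := by
  simp [TupConc]

theorem tupConc_length {α : Type*} (A B : List (List α)) :
    (TupConc A B).length = (A.length - 1) + (B.length - 1) + 1 := by
  simp [TupConc]; omega

theorem tupConc_assoc {α : Type*} (a b c : List (List α)) (hb : b ≠ []) :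
    TupConc (TupConc a b) c = TupConc a (TupConc b c) := by
  cases b with
  | nil => exact absurd rfl hb
  | cons w b =>
    rcases b.eq_nil_or_concat with rfl | ⟨b, v, rfl⟩
    · simp [TupConc, List.getLastD_eq_getLast?]
    · have h1 : TupConc a (w :: (b ++ [v])) = TupConc a [w] ++ b ++ [v] := by
        simp [TupConc]
      have h2 : TupConc (w :: (b ++ [v])) c = [w] ++ (b ++ TupConc [v] c) := by
        rw [← append_tupConc b [v] c (by simp), ← append_tupConc [w] _ c (by simp)]; rfl
      rw [List.concat_eq_append, h1, h2, append_tupConc _ [v] c (by simp),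
        tupConc_append a [w] _ (by simp), List.append_assoc]

theorem tupInter_append {α : Type*} (A B y : List (List α)) (l : ℕ) (h : A.length = l) :
    TupInter (A ++ B) l y = TupConc (TupConc A y) B := by
  subst h; simp [TupInter]

/-- `(x ⊙_l y) ⊙_j z = (x ⊙_{j − rk y + 1} z) ⊙_l y` for `1 ≤ l ≤ rk x`,
`l + rk y ≤ j ≤ rk x + rk y − 1`. -/
theorem tupInter_inter_above {α : Type*} (x y z : List (List α)) (j l : ℕ)
    (hx : x ≠ []) (hy : y ≠ []) (hz : z ≠ [])
    (hl1 : 1 ≤ l) (hl2 : l ≤ TupRk x) (hj1 : l + TupRk y ≤ j)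
    (hj2 : j ≤ TupRk x + TupRk y - 1) :
    TupInter (TupInter x l y) j z = TupInter (TupInter x (j - TupRk y + 1) z) l y := by 
  unfold TupRk at *
  have hxl := List.length_pos_iff.mpr hx
  have hyl := List.length_pos_iff.mpr hy
  obtain ⟨A, B, C, rfl, hA, hB, hC⟩ : ∃ A B C : List (List α), x = A ++ (B ++ C) ∧
      A.length = l ∧ B.length = j - (y.length - 1) + 1 - l ∧ 0 < C.length := by
    refine ⟨x.take l, (x.drop l).take (j - (y.length - 1) + 1 - l),
      (x.drop l).drop (j - (y.length - 1) + 1 - l), by simp, ?_, ?_, ?_⟩ <;>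
      simp only [List.length_take, List.length_drop] <;> omega
  have hB0 : B ≠ [] := by
    rw [← List.length_pos_iff]; omega
  rw [tupInter_append A _ y l hA, tupConc_append _ B C hB0,
    tupInter_append _ C z j (by simp only [tupConc_length]; omega),
    ← List.append_assoc, tupInter_append (A ++ B) C z _ (by simp only [List.length_append]; omega),
    append_tupConc A B z hB0, append_tupConc A _ C (tupConc_ne _ _), tupInter_append A _ y l hA,
    tupConc_assoc _ B z hB0, tupConc_assoc _ _ C (tupConc_ne _ _)]
end

section
/- For all tuples x, y over Σ and indices l, j with 1 ≤ l ≤ rk(x) and 1 ≤ j ≤ rk(x) + rk(y) − 1, the j-th bridge of x ⊙_l y satisfies: (x ⊙_l y)̂^j = x̂^j ⊙_{l−1} y if j < l; (x ⊙_l y)̂^j = x ⊙_l ŷ^{j−l+1} if l ≤ j < l + rk(y); and (x ⊙_l y)̂^j = x̂^{j − rk(y) + 1} ⊙_l y if j ≥ l + rk(y). -/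
/-- The `j`-th bridge of a tuple: removes the `j`-th gap by fusing components
`u_{j-1}` and `u_j`. -/
def TupBridge {α : Type*} (u : List (List α)) (j : ℕ) : List (List α) :=
  TupConc (u.take j) (u.drop j)

theorem conc_eq {α : Type*} (a b : List (List α)) (p q : List α) :
    TupConc (a ++ [p]) (q :: b) = a ++ (p ++ q) :: b := by
  simp [TupConc]

theorem bridge_eq {α : Type*} (a b : List (List α)) (p q : List α) (j : ℕ)
    (hj : j = a.length + 1) :
    TupBridge (a ++ p :: q :: b) j = a ++ (p ++ q) :: b := by
  subst hj
  have h : a ++ p :: q :: b = (a ++ [p]) ++ (q :: b) := by simp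
  have h2 : a.length + 1 = (a ++ [p]).length := by simp
  rw [TupBridge, h, h2, List.take_left, List.drop_left, conc_eq]

theorem decomp {α : Type*} (u : List (List α)) (j : ℕ) (h1 : 1 ≤ j) (h2 : j < u.length) :
    ∃ a p q b, u = a ++ p :: q :: b ∧ j = a.length + 1 := by
  refine ⟨u.take (j - 1), u[j - 1], u[j], u.drop (j + 1), ?_, ?_⟩
  · have e1 : u.drop (j - 1) = u[j - 1] :: u.drop (j - 1 + 1) := List.drop_eq_getElem_cons (by omega)
    have e2 : u.drop j = u[j] :: u.drop (j + 1) := List.drop_eq_getElem_cons h2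
    have e3 : j - 1 + 1 = j := by omega
    rw [e3, e2] at e1
    rw [← e1, List.take_append_drop]
  · simp; omega

theorem snoc_of_ne {α : Type*} (u : List (List α)) (h : u ≠ []) : ∃ a p, u = a ++ [p] :=
  ⟨u.dropLast, u.getLast h, (List.dropLast_append_getLast h).symm⟩

theorem cons_of_ne {α : Type*} (u : List (List α)) (h : u ≠ []) : ∃ p b, u = p :: b :=
  List.exists_cons_of_ne_nil h

theorem length_conc {α : Type*} (u v : List (List α)) (hu : u ≠ []) (hv : v ≠ []) :
    (TupConc u v).length = u.length + v.length - 1 := by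
  obtain ⟨a, p, rfl⟩ := snoc_of_ne u hu
  obtain ⟨q, b, rfl⟩ := cons_of_ne v hv
  rw [conc_eq]; simp; omega

theorem conc_ne {α : Type*} (u v : List (List α)) : TupConc u v ≠ [] := by
  simp [TupConc]

theorem length_bridge {α : Type*} (u : List (List α)) (j : ℕ) (h1 : 1 ≤ j) (h2 : j < u.length) :
    (TupBridge u j).length = u.length - 1 := by
  obtain ⟨a, p, q, b, rfl, hj⟩ := decomp u j h1 h2
  rw [bridge_eq _ _ _ _ _ hj]; simp

theorem bridge_conc_left {α : Type*} (u v : List (List α)) (j : ℕ) (h1 : 1 ≤ j)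
    (h2 : j < u.length) (hv : v ≠ []) :
    TupBridge (TupConc u v) j = TupConc (TupBridge u j) v := by
  obtain ⟨a, p, q, b, rfl, hj⟩ := decomp u j h1 h2
  obtain ⟨r, c, rfl⟩ := cons_of_ne v hv
  rw [bridge_eq _ _ _ _ _ hj]
  rcases List.eq_nil_or_concat b with rfl | ⟨d, s, rfl⟩
  · have h := conc_eq (a ++ [p]) c q r
    have h' := conc_eq a c (p ++ q) r
    simp only [List.append_assoc, List.singleton_append, List.cons_append, List.nil_append] at h h'
    rw [h, h', bridge_eq _ _ _ _ _ hj]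
  · have h := conc_eq (a ++ p :: q :: d) c s r
    have h' := conc_eq (a ++ (p ++ q) :: d) c s r
    simp only [List.append_assoc, List.cons_append] at h h'
    simp only [List.concat_eq_append, List.append_assoc] at *
    rw [h, h', bridge_eq _ _ _ _ _ hj]

theorem bridge_conc_right {α : Type*} (u v : List (List α)) (j : ℕ) (hu : u ≠ [])
    (h1 : 1 ≤ j) (h2 : j < v.length) (k : ℕ) (hk : k + 1 = u.length + j) :
    TupBridge (TupConc u v) k = TupConc u (TupBridge v j) := by
  obtain ⟨a, p, q, b, rfl, hj⟩ := decomp v j h1 h2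
  obtain ⟨c, r, rfl⟩ := snoc_of_ne u hu
  rw [bridge_eq _ _ _ _ _ hj]
  cases a with
  | nil =>
    simp only [List.nil_append, conc_eq]
    rw [bridge_eq _ _ _ _ _ (by simp at hk hj; omega), List.append_assoc]
  | cons s d =>
    simp only [List.cons_append, conc_eq]
    have h := bridge_eq (c ++ (r ++ s) :: d) b p q k (by simp at hk hj ⊢; omega)
    simpa only [List.append_assoc, List.cons_append] using h

theorem bridge_append_left {α : Type*} (u v : List (List α)) (j : ℕ) (h1 : 1 ≤ j)
    (h2 : j < u.length) : TupBridge (u ++ v) j = TupBridge u j ++ v := by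
  obtain ⟨a, p, q, b, rfl, hj⟩ := decomp u j h1 h2
  rw [bridge_eq _ _ _ _ _ hj]
  have h := bridge_eq a (b ++ v) p q j hj
  simpa only [List.append_assoc, List.cons_append] using h

theorem bridge_append_right {α : Type*} (u v : List (List α)) (j : ℕ) (h1 : 1 ≤ j)
    (h2 : j < v.length) (k : ℕ) (hk : k = u.length + j) :
    TupBridge (u ++ v) k = u ++ TupBridge v j := by
  obtain ⟨a, p, q, b, rfl, hj⟩ := decomp v j h1 h2
  rw [bridge_eq _ _ _ _ _ hj]
  have h := bridge_eq (u ++ a) b p q k (by simp; omega)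
  simpa only [List.append_assoc, List.cons_append] using h

theorem inter_append {α : Type*} (A B y : List (List α)) (l : ℕ) (h : l = A.length) :
    TupInter (A ++ B) l y = TupConc (TupConc A y) B := by
  subst h
  rw [TupInter, List.take_left, List.drop_left]

/-- Bridges of an intercalation `x ⊙_l y`, in the three cases `j < l`,
`l ≤ j < l + rk y` and `j ≥ l + rk y`. -/
theorem tupBridge_inter {α : Type*} (x y : List (List α)) (l j : ℕ)
    (hx : x ≠ []) (hy : y ≠ [])
    (hl1 : 1 ≤ l) (hl2 : l ≤ TupRk x)
    (hj1 : 1 ≤ j) (hj2 : j ≤ TupRk x + TupRk y - 1) :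
    (j < l → TupBridge (TupInter x l y) j = TupInter (TupBridge x j) (l - 1) y) ∧
    (l ≤ j → j < l + TupRk y →
      TupBridge (TupInter x l y) j = TupInter x l (TupBridge y (j - l + 1))) ∧
    (l + TupRk y ≤ j →
      TupBridge (TupInter x l y) j = TupInter (TupBridge x (j - TupRk y + 1)) l y) := by
  have hyl : 0 < y.length := List.length_pos_of_ne_nil hy
  unfold TupRk at *
  obtain ⟨A, B, rfl, hA⟩ : ∃ A B, x = A ++ B ∧ l = A.length :=
    ⟨x.take l, x.drop l, (List.take_append_drop l x).symm, by simp; omega⟩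
  rw [List.length_append] at hl2 hj2
  have hA0 : A ≠ [] := by rintro rfl; simp at hA; omega
  have hB0 : B ≠ [] := by rintro rfl; simp at hl2; omega
  have hlen := length_conc A y hA0 hy
  rw [inter_append A B y l hA]
  refine ⟨fun h => ?_, fun h h' => ?_, fun h => ?_⟩
  · rw [bridge_append_left _ _ _ hj1 (by omega),
      inter_append _ _ _ _ (by rw [length_bridge _ _ hj1 (by omega)]; omega),
      bridge_conc_left _ _ _ hj1 (by omega) hB0, bridge_conc_left _ _ _ hj1 (by omega) hy]
  · rw [inter_append _ _ _ _ hA, bridge_conc_left _ _ _ hj1 (by omega) hB0,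
      bridge_conc_right A y (j - l + 1) hA0 (by omega) (by omega) j (by omega)]
  · rw [bridge_append_right A B (j - (y.length - 1) + 1 - l) (by omega) (by omega) _ (by omega),
      inter_append _ _ _ _ hA,
      bridge_conc_right _ B (j - (y.length - 1) + 1 - l) (conc_ne _ _) (by omega) (by omega) j
        (by omega)]
end
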